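/- Let T > 0, Ω = (0,1) × (0,T), and let u be continuous on [0,1] × [0,T) and C² on Ω, satisfying u_t = P u_{xx} + Q u_x + Ψ(u) on Ω, where P is continuous and positive on [0,1] × [0,T), Q is continuous on (0,1) × [0,T), and Ψ : ℝ → ℝ is locally Lipschitz. Assume that for every t ∈ (0,T) there exist δ > 0 and a compact set K ⊂ (0,1) such that for every t′ ∈ (t − δ, t + δ) ∩ [0,T) the maximum u_max(t′) = max_{x ∈ [0,1]} u(x, t′) is attained at some point of K. If φ : [0,T) → ℝ is differentiable with φ′(t) = Ψ(φ(t)) for all t and φ(0) = u_max(0), then u(x,t) ≤ φ(t) for all (x,t) ∈ [0,1] × [0,T). (The analogous statement holds for minima with the reversed inequality.) -/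

import Mathlib

/-!
The proof is the classical weak maximum principle. Fix `t₁ < T`, let `L` be a Lipschitz constant of
`Ψ` on the compact set of values taken by `u` and `φ` up to time `t₁`, and look at a maximum point
`(x₀, t₀)` of `v = exp (-(L + 1) t) (u - φ)` on `[0,1] × [0,t₁]`. If `v` is positive there, then
`t₀ > 0`, and the attainment hypothesis lets `x₀` be moved into the open interval `(0,1)`. At such a
point `u_x = 0`, `u_xx ≤ 0` (`deriv_deriv_nonpos_of_isLocalMax`) and `v_t ≥ 0`
(`deriv_nonneg_of_max_left`), whereas the equation gives
`exp ((L + 1) t) v_t ≤ Ψ(u) - Ψ(φ) - (L + 1)(u - φ) ≤ -(u - φ) < 0`.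
-/

open Set

/-- `umax u t = max_{x ∈ [0,1]} u(x,t)` (as a supremum). -/
noncomputable def umax (u : ℝ → ℝ → ℝ) (t : ℝ) : ℝ :=
  sSup ((fun x => u x t) '' Icc 0 1)

/-- Second-order necessary condition. If the second derivative were positive, the point would also
be a local minimum, so `f` would be locally constant. Only continuity is assumed: when `f` is not
twice differentiable, `deriv (deriv f) x` is `0`. -/
lemma deriv_deriv_nonpos_of_isLocalMax {f : ℝ → ℝ} {x : ℝ} (h : IsLocalMax f x)
    (hc : ContinuousAt f x) : deriv (deriv f) x ≤ 0 := by
  by_contra! hpos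
  have hmin := isLocalMin_of_deriv_deriv_pos hpos h.deriv_eq_zero hc
  have hconst : f =ᶠ[nhds x] fun _ => f x := by
    filter_upwards [h, hmin] with y h1 h2 using le_antisymm h1 h2
  have h0 : deriv (deriv f) x = 0 := by
    rw [hconst.deriv.deriv_eq]
    simp
  linarith

/-- A function on `[a, t]` that is maximal at the right endpoint has nonnegative derivative there:
all left difference quotients are nonnegative. -/
lemma deriv_nonneg_of_max_left {g : ℝ → ℝ} {g' a t : ℝ} (hat : a < t) (hg : HasDerivAt g g' t)
    (hmax : ∀ s ∈ Icc a t, g s ≤ g t) : 0 ≤ g' := by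
  have h := (hasDerivWithinAt_iff_tendsto_slope' (by simp)).1 (hg.hasDerivWithinAt (s := Iio t))
  refine ge_of_tendsto h ?_
  filter_upwards [Ioo_mem_nhdsLT hat] with s hs
  rw [slope_def_field]
  exact div_nonneg_of_nonpos (by linarith [hmax s ⟨hs.1.le, hs.2.le⟩]) (by linarith [hs.2])

/-- Hamilton-type maximum principle (comparison part).  Let `u` be continuous on
`[0,1] × [0,T)` and `C²` on `Ω = (0,1) × (0,T)`, solving `u_t = P u_xx + Q u_x + Ψ(u)`
on `Ω`, with `P` continuous and positive on `[0,1] × [0,T)`, `Q` continuous on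
`(0,1) × [0,T)` and `Ψ` locally Lipschitz, and assume the interior attainment
condition for the spatial maxima.  If `φ : [0,T) → ℝ` is differentiable with
`φ' = Ψ(φ)` and `φ(0) = u_max(0)`, then `u(x,t) ≤ φ(t)` on `[0,1] × [0,T)`. -/
theorem stmt14 (T : ℝ) (hT : 0 < T) (u P Q : ℝ → ℝ → ℝ) (Ψ : ℝ → ℝ)
    (hu_cont : ContinuousOn (fun q : ℝ × ℝ => u q.1 q.2) (Icc 0 1 ×ˢ Ico 0 T))
    (hu_smooth : ContDiffOn ℝ 2 (fun q : ℝ × ℝ => u q.1 q.2) (Ioo 0 1 ×ˢ Ioo 0 T))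
    (hP_cont : ContinuousOn (fun q : ℝ × ℝ => P q.1 q.2) (Icc 0 1 ×ˢ Ico 0 T))
    (hP_pos : ∀ x ∈ Icc (0:ℝ) 1, ∀ t ∈ Ico (0:ℝ) T, 0 < P x t)
    (hQ_cont : ContinuousOn (fun q : ℝ × ℝ => Q q.1 q.2) (Ioo 0 1 ×ˢ Ico 0 T))
    (hΨ : LocallyLipschitz Ψ)
    (hpde : ∀ x ∈ Ioo (0:ℝ) 1, ∀ t ∈ Ioo (0:ℝ) T,
      deriv (fun τ => u x τ) t
        = P x t * deriv (deriv (fun y => u y t)) x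
          + Q x t * deriv (fun y => u y t) x + Ψ (u x t))
    (hK : ∀ t ∈ Ioo (0:ℝ) T, ∃ δ > (0:ℝ), ∃ K : Set ℝ, IsCompact K ∧ K ⊆ Ioo 0 1 ∧
      ∀ t' ∈ Ioo (t - δ) (t + δ) ∩ Ico 0 T,
        ∃ x ∈ K, ∀ y ∈ Icc (0:ℝ) 1, u y t' ≤ u x t')
    (φ : ℝ → ℝ)
    (hφ : ∀ t ∈ Ico (0:ℝ) T, HasDerivWithinAt φ (Ψ (φ t)) (Ico 0 T) t)
    (hφ0 : φ 0 = umax u 0) :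
    ∀ x ∈ Icc (0:ℝ) 1, ∀ t ∈ Ico (0:ℝ) T, u x t ≤ φ t := by
  intro x₁ hx₁ t₁ ht₁
  have hsub : Icc (0:ℝ) t₁ ⊆ Ico 0 T := fun s hs => ⟨hs.1, hs.2.trans_lt ht₁.2⟩
  have hφc : ContinuousOn φ (Icc 0 t₁) := fun s hs =>
    ((hφ s (hsub hs)).continuousWithinAt).mono hsub
  have huc : ContinuousOn (fun q : ℝ × ℝ => u q.1 q.2) (Icc 0 1 ×ˢ Icc 0 t₁) :=
    hu_cont.mono (prod_mono le_rfl hsub)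
  have hcpt : IsCompact (Icc (0:ℝ) 1 ×ˢ Icc (0:ℝ) t₁) := isCompact_Icc.prod isCompact_Icc
  obtain ⟨L, hL⟩ := LocallyLipschitzOn.exists_lipschitzOnWith_of_compact
    ((hcpt.image_of_continuousOn huc).union (isCompact_Icc.image_of_continuousOn hφc))
    hΨ.locallyLipschitzOn
  have hvc : ContinuousOn
      (fun q : ℝ × ℝ => Real.exp (-((L:ℝ) + 1) * q.2) * (u q.1 q.2 - φ q.2))
      (Icc 0 1 ×ˢ Icc 0 t₁) := by
    refine ContinuousOn.mul (by fun_prop) (huc.sub ?_)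
    exact hφc.comp continuousOn_snd fun q hq => hq.2
  obtain ⟨⟨x₀, t₀⟩, ⟨hx₀, ht₀⟩, hmax⟩ :=
    hcpt.exists_isMaxOn ⟨(x₁, t₁), hx₁, ht₁.1, le_rfl⟩ hvc
  simp only at hx₀ ht₀
  have hmax' : ∀ x ∈ Icc (0:ℝ) 1, ∀ t ∈ Icc (0:ℝ) t₁,
      Real.exp (-((L:ℝ) + 1) * t) * (u x t - φ t)
        ≤ Real.exp (-((L:ℝ) + 1) * t₀) * (u x₀ t₀ - φ t₀) :=
    fun x hx t ht => hmax (show (x, t) ∈ Icc (0:ℝ) 1 ×ˢ Icc (0:ℝ) t₁ from ⟨hx, ht⟩)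
  by_contra! hlt
  have hpos : 0 < u x₀ t₀ - φ t₀ := by
    have h1 := hmax' x₁ hx₁ t₁ ⟨ht₁.1, le_rfl⟩
    have h2 : 0 < Real.exp (-((L:ℝ) + 1) * t₁) * (u x₁ t₁ - φ t₁) :=
      mul_pos (Real.exp_pos _) (by linarith)
    exact pos_of_mul_pos_right (h2.trans_le h1) (Real.exp_pos _).le
  have ht₀pos : 0 < t₀ := by
    rcases ht₀.1.eq_or_lt with h0 | h0
    · exfalso
      rw [← h0, hφ0] at hpos
      have hc0 : ContinuousOn (fun x => u x 0) (Icc 0 1) :=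
        hu_cont.comp (f := fun x : ℝ => (x, (0:ℝ))) (by fun_prop)
          fun x hx => ⟨hx, le_rfl, hT⟩
      have : u x₀ 0 ≤ umax u 0 :=
        le_csSup (isCompact_Icc.image_of_continuousOn hc0).bddAbove ⟨x₀, hx₀, rfl⟩
      linarith
    · exact h0
  have ht₀T : t₀ < T := (hsub ht₀).2
  -- `x₀` may be an endpoint of `[0,1]`, so it is replaced by an interior maximum point `x` of
  -- `u(·, t₀)`, at which `v` is at least as large.
  obtain ⟨δ, hδ, K, -, hKsub, hKmax⟩ := hK t₀ ⟨ht₀pos, ht₀T⟩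
  obtain ⟨x, hxK, hx⟩ := hKmax t₀ ⟨⟨by linarith, by linarith⟩, hsub ht₀⟩
  have hxI := hKsub hxK
  have hx₀x := hx x₀ hx₀
  have hD : 0 < u x t₀ - φ t₀ := by linarith
  have hlm : IsLocalMax (fun y => u y t₀) x := by
    filter_upwards [Icc_mem_nhds hxI.1 hxI.2] with y hy using hx y hy
  have hdiff : DifferentiableAt ℝ (fun q : ℝ × ℝ => u q.1 q.2) (x, t₀) :=
    (hu_smooth.contDiffAt ((isOpen_Ioo.prod isOpen_Ioo).mem_nhds
      ⟨hxI, ht₀pos, ht₀T⟩)).differentiableAt (by norm_num)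
  have hcx : ContinuousAt (fun y => u y t₀) x :=
    ContinuousAt.comp (f := fun y : ℝ => (y, t₀)) hdiff.continuousAt (by fun_prop)
  have hdt : DifferentiableAt ℝ (fun τ => u x τ) t₀ :=
    DifferentiableAt.comp (f := fun τ : ℝ => (x, τ)) t₀ hdiff (by fun_prop)
  have hxx := deriv_deriv_nonpos_of_isLocalMax hlm hcx
  have hpde' := hpde x hxI t₀ ⟨ht₀pos, ht₀T⟩
  rw [hlm.deriv_eq_zero, mul_zero, add_zero] at hpde'
  have hPxx : P x t₀ * deriv (deriv (fun y => u y t₀)) x ≤ 0 :=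
    mul_nonpos_of_nonneg_of_nonpos
      (hP_pos x (Ioo_subset_Icc_self hxI) t₀ (hsub ht₀)).le hxx
  have hφd : HasDerivAt φ (Ψ (φ t₀)) t₀ :=
    (hφ t₀ (hsub ht₀)).hasDerivAt (Ico_mem_nhds ht₀pos ht₀T)
  have hexp : HasDerivAt (fun t => Real.exp (-((L:ℝ) + 1) * t))
      (Real.exp (-((L:ℝ) + 1) * t₀) * (-((L:ℝ) + 1))) t₀ := by
    simpa using ((hasDerivAt_id t₀).const_mul (-((L:ℝ) + 1))).exp
  have hv := hexp.mul (hdt.hasDerivAt.sub hφd)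
  have hvt := deriv_nonneg_of_max_left ht₀pos hv fun s hs =>
    (hmax' x (Ioo_subset_Icc_self hxI) s ⟨hs.1, hs.2.trans ht₀.2⟩).trans
      (mul_le_mul_of_nonneg_left (sub_le_sub_right hx₀x _) (Real.exp_pos _).le)
  have hΨle : Ψ (u x t₀) - Ψ (φ t₀) ≤ L * (u x t₀ - φ t₀) := by
    have h := hL.dist_le_mul (u x t₀)
      (Or.inl ⟨(x, t₀), ⟨Ioo_subset_Icc_self hxI, ht₀⟩, rfl⟩) (φ t₀) (Or.inr ⟨t₀, ht₀, rfl⟩)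
    rw [Real.dist_eq, Real.dist_eq, abs_of_pos hD] at h
    exact (le_abs_self _).trans h
  have hE := Real.exp_pos (-((L:ℝ) + 1) * t₀)
  have hneg : deriv (fun τ => u x τ) t₀ - Ψ (φ t₀) - (L + 1) * (u x t₀ - φ t₀) < 0 := by
    linarith
  have := mul_neg_of_pos_of_neg hE hneg
  simp only [Pi.sub_apply] at hvt
  linarith
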